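/- For every γ ∈ (0,1) there exists ζ > 0 such that m_γ = inf of G_γ(y) over all y ∈ M_ζ with ‖y‖_{W¹₂[0,1]} = 1. -/

import Mathlib

open MeasureTheory Set Real

noncomputable section

/-- Pairs `(y, y')` representing a function of Sobolev class `W¹₂[0,1]`:
`y` is absolutely continuous on `[0,1]` (being an integral of `y'`)
with derivative `y'` belonging to `L²[0,1]`. -/
def W12 : Set ((ℝ → ℝ) × (ℝ → ℝ)) :=
  {p | (∀ x ∈ Icc (0:ℝ) 1, p.1 x = p.1 0 + ∫ t in (0:ℝ)..x, p.2 t) ∧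
    IntervalIntegrable p.2 volume 0 1 ∧
    IntervalIntegrable (fun t => (p.2 t) ^ 2) volume 0 1}

/-- The Rayleigh quotient `(∫₀¹ ((y')² + q y²) dx) / (∫₀¹ y² dx)`. -/
def Rayleigh (q : ℝ → ℝ) (p : (ℝ → ℝ) × (ℝ → ℝ)) : ℝ :=
  (∫ t in (0:ℝ)..1, ((p.2 t) ^ 2 + q t * (p.1 t) ^ 2)) /
    ∫ t in (0:ℝ)..1, (p.1 t) ^ 2

/-- The smallest eigenvalue `λ₁(q)` of the Neumann problem `-y'' + q y = λ y`,
`y'(0) = y'(1) = 0`, defined as the infimum of Rayleigh quotients over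
nonzero `y ∈ W¹₂[0,1]`. -/
def lambda1 (q : ℝ → ℝ) : ℝ :=
  sInf {r | ∃ p ∈ W12, 0 < (∫ t in (0:ℝ)..1, (p.1 t) ^ 2) ∧ r = Rayleigh q p}

/-- The class `A_γ` of potentials: `q ∈ L¹[0,1]`, `q ≥ 0` a.e. on `[0,1]`,
`∫₀¹ q^γ dx = 1`. -/
def Agamma (γ : ℝ) : Set (ℝ → ℝ) :=
  {q | IntervalIntegrable q volume 0 1 ∧
    (∀ᵐ t ∂(volume.restrict (Icc (0:ℝ) 1)), 0 ≤ q t) ∧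
    (∫ t in (0:ℝ)..1, q t ^ γ) = 1}

/-- `m_γ := inf_{q ∈ A_γ} λ₁(q)`. -/
def mGamma (γ : ℝ) : ℝ := sInf (lambda1 '' Agamma γ)

/-- The set `M` of uniformly positive functions of class `W¹₂[0,1]`. -/
def Mset : Set ((ℝ → ℝ) × (ℝ → ℝ)) :=
  {p ∈ W12 | ∃ ζ > (0:ℝ), ∀ x ∈ Icc (0:ℝ) 1, ζ ≤ p.1 x}

/-- `J_γ(y) := ∫₀¹ (y')² dx + (∫₀¹ y^{2γ/(γ−1)} dx)^{(γ−1)/γ}`. -/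
def Jg (γ : ℝ) (p : (ℝ → ℝ) × (ℝ → ℝ)) : ℝ :=
  (∫ t in (0:ℝ)..1, (p.2 t) ^ 2) +
    (∫ t in (0:ℝ)..1, (p.1 t) ^ (2 * γ / (γ - 1))) ^ ((γ - 1) / γ)

/-- `G_γ(y) := J_γ(y) / ∫₀¹ y² dx`. -/
def Gg (γ : ℝ) (p : (ℝ → ℝ) × (ℝ → ℝ)) : ℝ :=
  Jg γ p / ∫ t in (0:ℝ)..1, (p.1 t) ^ 2

section Sobolev

variable {p : (ℝ → ℝ) × (ℝ → ℝ)}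

lemma W12.continuousOn (hp : p ∈ W12) : ContinuousOn p.1 (Icc 0 1) := by
  obtain ⟨h, hi, -⟩ := hp
  have hc : ContinuousOn (fun x => p.1 0 + ∫ t in (0:ℝ)..x, p.2 t) (Icc 0 1) := by
    refine continuousOn_const.add ?_
    have := intervalIntegral.continuousOn_primitive_interval (μ := volume) (f := p.2)
      (a := 0) (b := 1) (by
        rwa [uIcc_of_le zero_le_one, ← intervalIntegrable_iff_integrableOn_Icc_of_le zero_le_one])
    simpa [uIcc_of_le] using this
  exact hc.congr h

lemma W12.intervalIntegrable_sq (hp : p ∈ W12) :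
    IntervalIntegrable (fun t => p.1 t ^ 2) volume 0 1 :=
  ContinuousOn.intervalIntegrable_of_Icc zero_le_one ((W12.continuousOn hp).pow 2)

lemma W12.intervalIntegrable_mul_sq (hp : p ∈ W12) {q : ℝ → ℝ}
    (hq : IntervalIntegrable q volume 0 1) :
    IntervalIntegrable (fun t => q t * p.1 t ^ 2) volume 0 1 := by
  refine hq.mul_continuousOn ?_
  rw [uIcc_of_le zero_le_one]
  exact (W12.continuousOn hp).pow 2

lemma W12.smul (hp : p ∈ W12) (c : ℝ) : (fun t => c * p.1 t, fun t => c * p.2 t) ∈ W12 := by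
  obtain ⟨h, hi, hs⟩ := hp
  refine ⟨fun x hx => ?_, hi.const_mul c, ?_⟩
  · simp only [intervalIntegral.integral_const_mul, h x hx]
    ring
  · simpa only [mul_pow] using hs.const_mul (c ^ 2)

lemma one_mem_W12 : ((fun _ => 1, fun _ => 0) : (ℝ → ℝ) × (ℝ → ℝ)) ∈ W12 := by
  refine ⟨?_, ?_, ?_⟩ <;> simp

lemma W12.rayleigh_eq (hp : p ∈ W12) {q : ℝ → ℝ} (hq : IntervalIntegrable q volume 0 1) :
    Rayleigh q p = ((∫ t in (0:ℝ)..1, p.2 t ^ 2) + ∫ t in (0:ℝ)..1, q t * p.1 t ^ 2) /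
      ∫ t in (0:ℝ)..1, p.1 t ^ 2 := by
  rw [Rayleigh, intervalIntegral.integral_add hp.2.2 (W12.intervalIntegrable_mul_sq hp hq)]

lemma rayleigh_smul (q : ℝ → ℝ) {c : ℝ} (hc : c ≠ 0) :
    Rayleigh q (fun t => c * p.1 t, fun t => c * p.2 t) = Rayleigh q p := by
  have h1 : ∀ t, (c * p.2 t) ^ 2 + q t * (c * p.1 t) ^ 2
      = c ^ 2 * (p.2 t ^ 2 + q t * p.1 t ^ 2) := fun t => by ring
  simp only [Rayleigh, h1, intervalIntegral.integral_const_mul]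
  simp only [mul_pow, intervalIntegral.integral_const_mul]
  exact mul_div_mul_left _ _ (pow_ne_zero 2 hc)

lemma integral_mul_sq_nonneg {q : ℝ → ℝ}
    (hq : ∀ᵐ t ∂(volume.restrict (Icc (0:ℝ) 1)), 0 ≤ q t) (y : ℝ → ℝ) :
    0 ≤ ∫ t in (0:ℝ)..1, q t * y t ^ 2 := by
  refine intervalIntegral.integral_nonneg_of_ae_restrict zero_le_one ?_
  filter_upwards [hq] with t ht
  exact mul_nonneg ht (sq_nonneg _)

lemma integral_sq_nonneg (f : ℝ → ℝ) : 0 ≤ ∫ t in (0:ℝ)..1, f t ^ 2 :=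
  intervalIntegral.integral_nonneg zero_le_one fun _ _ => sq_nonneg _

lemma W12.integral_sq_pos (hp : p ∈ W12) {ζ : ℝ} (hζ : 0 < ζ)
    (h : ∀ x ∈ Icc (0:ℝ) 1, ζ ≤ p.1 x) : 0 < ∫ t in (0:ℝ)..1, p.1 t ^ 2 := by
  refine intervalIntegral.intervalIntegral_pos_of_pos_on (W12.intervalIntegrable_sq hp) ?_ one_pos
  intro x hx
  exact pow_pos (hζ.trans_le (h x (Ioo_subset_Icc_self hx))) 2

lemma W12.abs_sub_le (hp : p ∈ W12) {k : ℝ} (hk : 0 < k)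
    (hS : ∫ t in (0:ℝ)..1, p.2 t ^ 2 ≤ k ^ 2) {x z : ℝ} (hx : x ∈ Icc (0:ℝ) 1)
    (hz : z ∈ Icc (0:ℝ) 1) : |p.1 x - p.1 z| ≤ k := by
  obtain ⟨h, hi, hs⟩ := hp
  have hsub : ∀ {a b : ℝ}, a ∈ Icc (0:ℝ) 1 → b ∈ Icc (0:ℝ) 1 →
      IntervalIntegrable p.2 volume a b := fun ha hb =>
    hi.mono_set (by rw [uIcc_of_le (zero_le_one' ℝ)]; exact uIcc_subset_Icc ha hb)
  have h0 : (0:ℝ) ∈ Icc (0:ℝ) 1 := by simp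
  have hxz : p.1 x - p.1 z = ∫ t in z..x, p.2 t := by
    rw [h x hx, h z hz, ← intervalIntegral.integral_interval_sub_left (hsub h0 hx) (hsub h0 hz)]
    ring
  have hle : |∫ t in z..x, p.2 t| ≤ ∫ t in (0:ℝ)..1, |p.2 t| := by
    rw [← Real.norm_eq_abs]
    refine (intervalIntegral.norm_integral_le_integral_norm_uIoc).trans ?_
    rw [intervalIntegral.integral_of_le zero_le_one]
    refine setIntegral_mono_set ((intervalIntegrable_iff_integrableOn_Ioc_of_le zero_le_one).1
      hi.norm) (.of_forall fun _ => norm_nonneg _) (LE.le.eventuallyLE ?_)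
    exact Ioc_subset_Ioc (le_min hz.1 hx.1) (max_le hz.2 hx.2)
  have hyoung : ∫ t in (0:ℝ)..1, |p.2 t| ≤ ∫ t in (0:ℝ)..1, ((2 * k)⁻¹ * p.2 t ^ 2 + k / 2) := by
    refine intervalIntegral.integral_mono_on zero_le_one hi.norm
      ((hs.const_mul _).add (by simp)) fun t _ => ?_
    have : (2 * k)⁻¹ * p.2 t ^ 2 + k / 2 - |p.2 t| = (2 * k)⁻¹ * (|p.2 t| - k) ^ 2 := by
      rw [← sq_abs (p.2 t)]
      field_simp
      ring
    have : 0 ≤ (2 * k)⁻¹ * (|p.2 t| - k) ^ 2 := by positivity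
    linarith
  rw [intervalIntegral.integral_add (hs.const_mul _) (by simp),
    intervalIntegral.integral_const_mul] at hyoung
  have hk2 : (2 * k)⁻¹ * ∫ t in (0:ℝ)..1, p.2 t ^ 2 ≤ k / 2 := by
    calc _ ≤ (2 * k)⁻¹ * k ^ 2 := by gcongr
      _ = k / 2 := by field_simp
  simp only [intervalIntegral.integral_const, sub_zero, one_smul] at hyoung
  rw [hxz]
  linarith

/-- A function whose derivative is small in `L²` compared with the function itself keeps a
constant sign and is uniformly bounded away from zero. -/
lemma W12.exists_sign_mul_ge (hp : p ∈ W12) {r : ℝ} (hr : 0 < r)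
    (hN : 0 < ∫ t in (0:ℝ)..1, p.1 t ^ 2)
    (hS : ∫ t in (0:ℝ)..1, p.2 t ^ 2 ≤ r ^ 2 * ∫ t in (0:ℝ)..1, p.1 t ^ 2) :
    ∃ s : ℝ, s ^ 2 = 1 ∧
      ∀ x ∈ Icc (0:ℝ) 1, (1 - r) * √(∫ t in (0:ℝ)..1, p.1 t ^ 2) ≤ s * p.1 x := by
  set N := ∫ t in (0:ℝ)..1, p.1 t ^ 2
  obtain ⟨z, hz, hmax⟩ := isCompact_Icc.exists_isMaxOn (nonempty_Icc.2 (zero_le_one' ℝ))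
    ((W12.continuousOn hp).pow 2)
  have hNz : N ≤ p.1 z ^ 2 := by
    have := intervalIntegral.integral_mono_on zero_le_one (W12.intervalIntegrable_sq hp)
      (intervalIntegrable_const (c := p.1 z ^ 2)) fun t ht => hmax ht
    simpa using this
  have hz' : √N ≤ |p.1 z| := Real.sqrt_le_iff.2 ⟨abs_nonneg _, by rwa [sq_abs]⟩
  have hosc : ∀ x ∈ Icc (0:ℝ) 1, |p.1 x - p.1 z| ≤ r * √N := fun x hx =>
    W12.abs_sub_le hp (mul_pos hr (Real.sqrt_pos.2 hN))
      (by rwa [mul_pow, Real.sq_sqrt hN.le]) hx hz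
  rcases abs_cases (p.1 z) with ⟨h, -⟩ | ⟨h, -⟩
  · refine ⟨1, by norm_num, fun x hx => ?_⟩
    linarith [(abs_le.1 (hosc x hx)).1]
  · refine ⟨-1, by norm_num, fun x hx => ?_⟩
    linarith [(abs_le.1 (hosc x hx)).2]

end Sobolev

section Potentials

variable {γ : ℝ} {p : (ℝ → ℝ) × (ℝ → ℝ)} {q : ℝ → ℝ}

lemma one_mem_Agamma (γ : ℝ) : (fun _ => 1) ∈ Agamma γ := by
  refine ⟨by simp, by simp, by simp⟩

lemma rayleigh_nonneg (hq : ∀ᵐ t ∂(volume.restrict (Icc (0:ℝ) 1)), 0 ≤ q t) :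
    0 ≤ Rayleigh q p := by
  refine div_nonneg (intervalIntegral.integral_nonneg_of_ae_restrict zero_le_one ?_)
    (integral_sq_nonneg _)
  filter_upwards [hq] with t ht
  exact add_nonneg (sq_nonneg _) (mul_nonneg ht (sq_nonneg _))

lemma lambda1_nonneg (hq : q ∈ Agamma γ) : 0 ≤ lambda1 q := by
  refine Real.sInf_nonneg ?_
  rintro _ ⟨p, -, -, rfl⟩
  exact rayleigh_nonneg hq.2.1

lemma mGamma_nonneg (γ : ℝ) : 0 ≤ mGamma γ := by
  refine Real.sInf_nonneg ?_
  rintro _ ⟨q, hq, rfl⟩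
  exact lambda1_nonneg hq

lemma mGamma_le_rayleigh (hq : q ∈ Agamma γ) (hp : p ∈ W12)
    (hN : 0 < ∫ t in (0:ℝ)..1, p.1 t ^ 2) : mGamma γ ≤ Rayleigh q p := by
  have h1 : mGamma γ ≤ lambda1 q := by
    refine csInf_le ⟨0, ?_⟩ (mem_image_of_mem _ hq)
    rintro _ ⟨q, hq, rfl⟩
    exact lambda1_nonneg hq
  refine h1.trans (csInf_le ⟨0, ?_⟩ ⟨p, hp, hN, rfl⟩)
  rintro _ ⟨p, -, -, rfl⟩
  exact rayleigh_nonneg hq.2.1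

lemma exists_rayleigh_lt {a : ℝ} (ha : mGamma γ < a) :
    ∃ q ∈ Agamma γ, ∃ p ∈ W12, 0 < (∫ t in (0:ℝ)..1, p.1 t ^ 2) ∧ Rayleigh q p < a := by
  obtain ⟨_, ⟨q, hq, rfl⟩, hqa⟩ :=
    exists_lt_of_csInf_lt ⟨_, mem_image_of_mem _ (one_mem_Agamma γ)⟩ ha
  obtain ⟨_, ⟨p, hp, hN, rfl⟩, hpa⟩ :=
    exists_lt_of_csInf_lt (by exact ⟨_, _, one_mem_W12, by simp, rfl⟩) hqa
  exact ⟨q, hq, p, hp, hN, hpa⟩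

lemma W12.continuousOn_rpow (hp : p ∈ W12) {ζ : ℝ} (hζ : 0 < ζ)
    (h : ∀ x ∈ Icc (0:ℝ) 1, ζ ≤ p.1 x) (e : ℝ) :
    ContinuousOn (fun t => p.1 t ^ e) (Icc 0 1) :=
  (W12.continuousOn hp).rpow_const fun x hx => Or.inl (hζ.trans_le (h x hx)).ne'

lemma W12.integral_rpow_pos (hp : p ∈ W12) {ζ : ℝ} (hζ : 0 < ζ)
    (h : ∀ x ∈ Icc (0:ℝ) 1, ζ ≤ p.1 x) (e : ℝ) : 0 < ∫ t in (0:ℝ)..1, p.1 t ^ e :=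
  intervalIntegral.intervalIntegral_pos_of_pos_on
    ((W12.continuousOn_rpow hp hζ h e).intervalIntegrable_of_Icc zero_le_one)
    (fun x hx => Real.rpow_pos_of_pos (hζ.trans_le (h x (Ioo_subset_Icc_self hx))) _) one_pos

/-- For a uniformly positive `y`, the value `G_γ(y)` is a Rayleigh quotient of `y` for the
potential of class `A_γ` proportional to `y^{2/(γ-1)}`. -/
lemma mGamma_le_Gg (hγ : γ ∈ Ioo (0:ℝ) 1) (hp : p ∈ W12) {ζ : ℝ} (hζ : 0 < ζ)
    (h : ∀ x ∈ Icc (0:ℝ) 1, ζ ≤ p.1 x) : mGamma γ ≤ Gg γ p := by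
  have hγ0 : γ ≠ 0 := hγ.1.ne'
  have hγ1 : γ - 1 ≠ 0 := by linarith [hγ.2]
  have hpos : ∀ x ∈ Icc (0:ℝ) 1, 0 < p.1 x := fun x hx => hζ.trans_le (h x hx)
  have hKpos := W12.integral_rpow_pos hp hζ h (2 * γ / (γ - 1))
  set K := ∫ t in (0:ℝ)..1, p.1 t ^ (2 * γ / (γ - 1)) with hK
  set q : ℝ → ℝ := fun t => K ^ (-1 / γ) * p.1 t ^ (2 / (γ - 1)) with hq
  have hqi : IntervalIntegrable q volume 0 1 :=
    ((W12.continuousOn_rpow hp hζ h _).intervalIntegrable_of_Icc zero_le_one).const_mul _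
  have hqA : q ∈ Agamma γ := by
    refine ⟨hqi, ?_, ?_⟩
    · filter_upwards [ae_restrict_mem measurableSet_Icc] with t ht
      exact mul_nonneg (Real.rpow_nonneg hKpos.le _) (Real.rpow_nonneg (hpos t ht).le _)
    · have : ∫ t in (0:ℝ)..1, q t ^ γ = ∫ t in (0:ℝ)..1, K⁻¹ * p.1 t ^ (2 * γ / (γ - 1)) := by
        refine intervalIntegral.integral_congr fun t ht => ?_
        rw [uIcc_of_le zero_le_one] at ht
        simp only [hq]
        rw [Real.mul_rpow (Real.rpow_nonneg hKpos.le _) (Real.rpow_nonneg (hpos t ht).le _),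
          ← Real.rpow_mul hKpos.le, ← Real.rpow_mul (hpos t ht).le, div_mul_cancel₀ _ hγ0,
          Real.rpow_neg_one, div_mul_eq_mul_div]
      rw [this, intervalIntegral.integral_const_mul, ← hK, inv_mul_cancel₀ hKpos.ne']
  have hqy : ∫ t in (0:ℝ)..1, q t * p.1 t ^ 2 = K ^ ((γ - 1) / γ) := by
    have : ∫ t in (0:ℝ)..1, q t * p.1 t ^ 2
        = ∫ t in (0:ℝ)..1, K ^ (-1 / γ) * p.1 t ^ (2 * γ / (γ - 1)) := by
      refine intervalIntegral.integral_congr fun t ht => ?_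
      rw [uIcc_of_le zero_le_one] at ht
      simp only [hq]
      rw [mul_assoc, ← Real.rpow_natCast (p.1 t) 2, ← Real.rpow_add (hpos t ht)]
      congr 2
      push_cast
      field_simp
      ring
    rw [this, intervalIntegral.integral_const_mul, ← hK]
    nth_rewrite 2 [← Real.rpow_one K]
    rw [← Real.rpow_add hKpos]
    congr 1
    field_simp
    ring
  have hle := mGamma_le_rayleigh hqA hp (W12.integral_sq_pos hp hζ h)
  rwa [(W12.rayleigh_eq hp) hqi, hqy] at hle

/-- The reverse Hölder inequality `∫ q y² ≥ (∫ y^{2γ/(γ-1)})^{(γ-1)/γ}` for `q ∈ A_γ`. -/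
lemma rpow_integral_le_integral_mul_sq (hγ : γ ∈ Ioo (0:ℝ) 1) (hq : q ∈ Agamma γ)
    (hp : p ∈ W12) {ζ : ℝ} (hζ : 0 < ζ) (h : ∀ x ∈ Icc (0:ℝ) 1, ζ ≤ p.1 x) :
    (∫ t in (0:ℝ)..1, p.1 t ^ (2 * γ / (γ - 1))) ^ ((γ - 1) / γ)
      ≤ ∫ t in (0:ℝ)..1, q t * p.1 t ^ 2 := by
  obtain ⟨hqi, hq0, hq1⟩ := hq
  have hγ0 : γ ≠ 0 := hγ.1.ne'
  have hγ1 : γ - 1 ≠ 0 := by linarith [hγ.2]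
  have hpos : ∀ x ∈ Icc (0:ℝ) 1, 0 < p.1 x := fun x hx => hζ.trans_le (h x hx)
  have hKpos := W12.integral_rpow_pos hp hζ h (2 * γ / (γ - 1))
  have hKi : IntervalIntegrable (fun t => p.1 t ^ (2 * γ / (γ - 1))) volume 0 1 :=
    (W12.continuousOn_rpow hp hζ h _).intervalIntegrable_of_Icc zero_le_one
  have hQi := W12.intervalIntegrable_mul_sq hp hqi
  have hQ0 := integral_mul_sq_nonneg hq0 p.1
  set K := ∫ t in (0:ℝ)..1, p.1 t ^ (2 * γ / (γ - 1)) with hK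
  set Q := ∫ t in (0:ℝ)..1, q t * p.1 t ^ 2 with hQ
  refine le_of_forall_pos_le_add fun ε hε => ?_
  set Q' := Q + ε with hQ'
  have hQ'pos : 0 < Q' := by linarith
  have hqγi : IntervalIntegrable (fun t => q t ^ γ) volume 0 1 := by
    by_contra hn
    rw [intervalIntegral.integral_undef hn] at hq1
    exact zero_ne_one hq1
  set C := (Q' ^ γ * K ^ (1 - γ))⁻¹ with hC
  have hyoung : ∫ t in (0:ℝ)..1, C * q t ^ γ
      ≤ ∫ t in (0:ℝ)..1, (γ / Q' * (q t * p.1 t ^ 2) +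
          (1 - γ) / K * p.1 t ^ (2 * γ / (γ - 1))) := by
    refine intervalIntegral.integral_mono_ae_restrict zero_le_one (hqγi.const_mul _)
      ((hQi.const_mul _).add (hKi.const_mul _)) ?_
    filter_upwards [hq0, ae_restrict_mem measurableSet_Icc] with t hqt ht
    have hy := hpos t ht
    have hA : 0 ≤ q t * p.1 t ^ 2 := by positivity
    have hB : 0 < p.1 t ^ (2 * γ / (γ - 1)) := Real.rpow_pos_of_pos hy _
    have key := Real.geom_mean_le_arith_mean2_weighted hγ.1.le (sub_nonneg.2 hγ.2.le)
      (div_nonneg hA hQ'pos.le) (div_nonneg hB.le hKpos.le) (by ring)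
    have hprod : (q t * p.1 t ^ 2) ^ γ * (p.1 t ^ (2 * γ / (γ - 1))) ^ (1 - γ) = q t ^ γ := by
      rw [Real.mul_rpow hqt (by positivity), ← Real.rpow_natCast (p.1 t) 2,
        ← Real.rpow_mul hy.le, ← Real.rpow_mul hy.le, mul_assoc, ← Real.rpow_add hy]
      have : ((2:ℕ):ℝ) * γ + 2 * γ / (γ - 1) * (1 - γ) = 0 := by
        push_cast
        field_simp
        ring
      rw [this, Real.rpow_zero, mul_one]
    rw [Real.div_rpow hA hQ'pos.le, Real.div_rpow hB.le hKpos.le, div_mul_div_comm, hprod] at key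
    calc C * q t ^ γ = q t ^ γ / (Q' ^ γ * K ^ (1 - γ)) := by rw [hC, div_eq_inv_mul]
      _ ≤ _ := key
      _ = _ := by ring
  rw [intervalIntegral.integral_add (hQi.const_mul _) (hKi.const_mul _)] at hyoung
  simp only [intervalIntegral.integral_const_mul] at hyoung
  rw [hq1, ← hQ, ← hK, mul_one, div_mul_cancel₀ _ hKpos.ne'] at hyoung
  have hfrac : γ / Q' * Q ≤ γ := by
    rw [div_mul_eq_mul_div, div_le_iff₀ hQ'pos]
    exact mul_le_mul_of_nonneg_left (by linarith) hγ.1.le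
  have hC1 : C ≤ 1 := by linarith
  have hone : 1 ≤ Q' ^ γ * K ^ (1 - γ) := by
    rwa [hC, inv_le_one₀ (by positivity)] at hC1
  have hpow : K ^ (γ - 1) ≤ Q' ^ γ := by
    rw [← neg_sub, Real.rpow_neg hKpos.le]
    exact inv_le_of_inv_le₀ (by positivity) (by
      rw [inv_le_iff_one_le_mul₀ (by positivity), mul_comm]; exact hone)
  calc K ^ ((γ - 1) / γ) = (K ^ (γ - 1)) ^ γ⁻¹ := by
        rw [← Real.rpow_mul hKpos.le, div_eq_mul_inv]
    _ ≤ (Q' ^ γ) ^ γ⁻¹ :=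
        Real.rpow_le_rpow (by positivity) hpow (inv_nonneg.2 hγ.1.le)
    _ = Q' := Real.rpow_rpow_inv hQ'pos.le hγ0

lemma Gg_le_rayleigh (hγ : γ ∈ Ioo (0:ℝ) 1) (hq : q ∈ Agamma γ)
    (hp : p ∈ W12) {ζ : ℝ} (hζ : 0 < ζ) (h : ∀ x ∈ Icc (0:ℝ) 1, ζ ≤ p.1 x) :
    Gg γ p ≤ Rayleigh q p := by
  rw [W12.rayleigh_eq hp hq.1, Gg, Jg]
  have := rpow_integral_le_integral_mul_sq hγ hq hp hζ h
  have := integral_sq_nonneg p.1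
  gcongr

/-- If the Rayleigh quotient is at most `r² < 1`, then `y` has a multiple on the unit sphere of
`W¹₂[0,1]` bounded below by `(1 - r)/2`. -/
lemma W12.exists_smul_mem_sphere (hp : p ∈ W12) (hq : q ∈ Agamma γ) {r : ℝ} (hr : 0 < r)
    (hr1 : r < 1) (hN : 0 < ∫ t in (0:ℝ)..1, p.1 t ^ 2) (hR : Rayleigh q p ≤ r ^ 2) :
    ∃ c : ℝ, c ≠ 0 ∧ (∀ x ∈ Icc (0:ℝ) 1, (1 - r) / 2 ≤ c * p.1 x) ∧
      ∫ t in (0:ℝ)..1, ((c * p.1 t) ^ 2 + (c * p.2 t) ^ 2) = 1 := by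
  have hS : ∫ t in (0:ℝ)..1, p.2 t ^ 2 ≤ r ^ 2 * ∫ t in (0:ℝ)..1, p.1 t ^ 2 := by
    rw [W12.rayleigh_eq hp hq.1, div_le_iff₀ hN] at hR
    linarith [integral_mul_sq_nonneg hq.2.1 p.1]
  obtain ⟨s, hs, hsy⟩ := W12.exists_sign_mul_ge hp hr hN hS
  have hS0 := integral_sq_nonneg p.2
  have hi : ∫ t in (0:ℝ)..1, (p.1 t ^ 2 + p.2 t ^ 2)
      = (∫ t in (0:ℝ)..1, p.1 t ^ 2) + ∫ t in (0:ℝ)..1, p.2 t ^ 2 :=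
    intervalIntegral.integral_add (W12.intervalIntegrable_sq hp) hp.2.2
  set N := ∫ t in (0:ℝ)..1, p.1 t ^ 2
  set S := ∫ t in (0:ℝ)..1, p.2 t ^ 2
  have hNS : 0 < √(N + S) := Real.sqrt_pos.2 (by linarith)
  have hs0 : s ≠ 0 := by
    rintro rfl
    norm_num at hs
  refine ⟨s / √(N + S), div_ne_zero hs0 hNS.ne', fun x hx => ?_, ?_⟩
  · have hle : √(N + S) ≤ 2 * √N := by
      refine Real.sqrt_le_iff.2 ⟨by positivity, ?_⟩
      rw [mul_pow, Real.sq_sqrt hN.le]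
      have : r ^ 2 * N ≤ 1 * N := by gcongr; exact pow_le_one₀ hr.le hr1.le
      linarith
    rw [div_mul_eq_mul_div, le_div_iff₀ hNS]
    nlinarith [hsy x hx]
  · simp only [mul_pow, ← mul_add, intervalIntegral.integral_const_mul, hi]
    rw [div_pow, hs, Real.sq_sqrt (by linarith), one_div, inv_mul_cancel₀ (by linarith)]

end Potentials

/-- There exists `ζ > 0` such that `m_γ` is the infimum of `G_γ` over all
`y ∈ M_ζ` lying on the unit sphere of `W¹₂[0,1]`. -/
theorem mGamma_eq_inf_on_sphere (γ : ℝ) (hγ : γ ∈ Ioo (0:ℝ) 1) :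
    ∃ ζ > (0:ℝ), mGamma γ = sInf (Gg γ ''
      {p ∈ W12 | (∀ x ∈ Icc (0:ℝ) 1, ζ ≤ p.1 x) ∧
        (∫ t in (0:ℝ)..1, ((p.1 t) ^ 2 + (p.2 t) ^ 2)) = 1}) := by
  set T : ℝ → Set ((ℝ → ℝ) × (ℝ → ℝ)) := fun ζ => {p ∈ W12 | (∀ x ∈ Icc (0:ℝ) 1, ζ ≤ p.1 x) ∧
    (∫ t in (0:ℝ)..1, ((p.1 t) ^ 2 + (p.2 t) ^ 2)) = 1}
  have hone : ∀ {ζ : ℝ}, ζ ≤ 1 → ((fun _ => 1, fun _ => 0) : (ℝ → ℝ) × (ℝ → ℝ)) ∈ T ζ :=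
    fun hζ => ⟨one_mem_W12, fun _ _ => hζ, by simp⟩
  have hlow : ∀ {ζ : ℝ}, 0 < ζ → mGamma γ ∈ lowerBounds (Gg γ '' T ζ) := by
    rintro ζ hζ _ ⟨p, ⟨hp, h, -⟩, rfl⟩
    exact mGamma_le_Gg hγ hp hζ h
  rcases le_or_gt 1 (mGamma γ) with hm | hm
  · refine ⟨1, one_pos, le_antisymm
      (le_csInf ⟨_, mem_image_of_mem _ (hone le_rfl)⟩ (hlow one_pos)) ?_⟩
    refine (csInf_le ⟨_, hlow one_pos⟩ (mem_image_of_mem _ (hone le_rfl))).trans (le_trans ?_ hm)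
    simp [Gg, Jg]
  · have hm0 := mGamma_nonneg γ
    obtain ⟨r, hr, hr1, hmr⟩ : ∃ r : ℝ, 0 < r ∧ r < 1 ∧ mGamma γ < r ^ 2 := by
      refine ⟨√((1 + mGamma γ) / 2), Real.sqrt_pos.2 (by linarith), ?_, ?_⟩
      · rw [Real.sqrt_lt' one_pos]
        linarith
      · rw [Real.sq_sqrt (by linarith)]
        linarith
    have hζ : 0 < (1 - r) / 2 := by linarith
    refine ⟨(1 - r) / 2, hζ, le_antisymm
      (le_csInf ⟨_, mem_image_of_mem _ (hone (by linarith))⟩ (hlow hζ)) ?_⟩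
    refine le_of_forall_gt_imp_ge_of_dense fun a ha => ?_
    obtain ⟨q, hq, p, hp, hN, hR⟩ := exists_rayleigh_lt (lt_min ha hmr)
    obtain ⟨c, hc, hcy, hnorm⟩ :=
      W12.exists_smul_mem_sphere hp hq hr hr1 hN (hR.le.trans (min_le_right _ _))
    refine (csInf_le ⟨_, hlow hζ⟩ (mem_image_of_mem _ ⟨W12.smul hp c, hcy, hnorm⟩)).trans ?_
    refine (Gg_le_rayleigh hγ hq (W12.smul hp c) hζ hcy).trans ?_
    rw [rayleigh_smul q hc]
    exact hR.le.trans (min_le_left _ _)
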